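/- Let Y be a squared-Bessel process of dimension δ > 0 started at y ≥ 0, let α ≥ 0, γ > −α, and A_t = ∫_1^t s^γ Y_s^α ds. Then almost surely lim_{t→∞} (log A_t)/(log t) = 1 + γ + α. -/

import Mathlib

open MeasureTheory Filter Set

/-- `Y` is a squared-Bessel process of dimension `δ` started at `y`, characterized via the
martingale problem: `Y_t - y - δ t` is a martingale with quadratic variation `4∫_0^t Y_s ds`. -/
structure IsBESQ {Ω : Type*} {m : MeasurableSpace Ω} (μ : Measure Ω)
    (ℱ : Filtration ℝ m) (δ y : ℝ) (Y : ℝ → Ω → ℝ) : Prop where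
  nonneg : ∀ t ω, 0 ≤ Y t ω
  cont : ∀ ω, Continuous fun t => Y t ω
  init : ∀ ω, Y 0 ω = y
  adapted : Adapted ℱ Y
  integrable_sq : ∀ t : ℝ, Integrable (fun ω => (Y t ω) ^ 2) μ
  mart : ∀ s t : ℝ, 0 ≤ s → s ≤ t →
    (μ[(fun ω => Y t ω - y - δ * t) | ℱ s]) =ᵐ[μ] fun ω => Y s ω - y - δ * s
  qv : ∀ s t : ℝ, 0 ≤ s → s ≤ t →
    (μ[(fun ω => (Y t ω - y - δ * t) ^ 2 - 4 * ∫ u in (0:ℝ)..t, Y u ω) | ℱ s])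
      =ᵐ[μ] fun ω => (Y s ω - y - δ * s) ^ 2 - 4 * ∫ u in (0:ℝ)..s, Y u ω

/-!
Along a path of `Y` the theorem follows from two facts: `Y_s ≤ K_ε s^(1+ε)` for every `ε > 0`, and
`∫_1^t Y_s / s² ds ~ δ log t`. The first bounds `A_t` above. For the lower bound, the average of
`Y_s / s` against `ds / s` over `[t^(1-θ), t]` stays near `δ`, while `Y_s / s ≤ K t^θ` there. A
variable bounded by a small power of `t` cannot have mean near `δ` unless its `α`-th power has a
mean that is not much smaller, and this holds both for `α ≤ 1` and for `α ≥ 1`.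

The growth bound comes from Doob's maximal inequality and Borel-Cantelli at the times `e^n`. For the
averages, `M_t = Y_t - y - δ t` is a martingale with `E[M_s M_t] = E[M_s²] = O(s²)` for `s ≤ t`, so
`∫_1^T M_s / s² ds` has second moment `O(log T)`. Along `T = e^{n²}` this is summable after division
by `n⁴`, and monotonicity of `∫_1^T Y_s / s² ds` fills the gaps.
-/

open Asymptotics
open scoped NNReal Topology

section LogGrowth

lemma eventually_log_lt_log_add_of_isBigO {ι : Type*} {l : Filter ι} {f g L : ι → ℝ}
    (hfg : f =O[l] g) (hf : ∀ᶠ x in l, f x ≠ 0) (hL : Tendsto L l atTop) :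
    ∀ᶠ x in l, Real.log (f x) < Real.log (g x) + L x := by
  obtain ⟨C, hC, hle⟩ := hfg.exists_pos
  filter_upwards [hle.bound, hf, hL.eventually_gt_atTop (Real.log C)] with x hx hfx hLx
  have hgx : g x ≠ 0 := by
    intro h
    exact hfx (by simpa [h] using hx)
  have hlog : Real.log (f x) ≤ Real.log C + Real.log (g x) := by
    rw [← Real.log_abs (f x), ← Real.log_abs (g x), ← Real.log_mul hC.ne' (abs_ne_zero.2 hgx)]
    exact Real.log_le_log (abs_pos.2 hfx) hx
  linarith

lemma tendsto_log_div_log_of_isBigO_rpow {A : ℝ → ℝ} {p : ℝ}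
    (hlower : ∀ ε > 0, (fun t ↦ t ^ (p - ε)) =O[atTop] A)
    (hupper : ∀ ε > 0, A =O[atTop] fun t ↦ t ^ (p + ε)) :
    Tendsto (fun t ↦ Real.log (A t) / Real.log t) atTop (𝓝 p) := by
  have hrpow_ne (q : ℝ) : ∀ᶠ t : ℝ in atTop, t ^ q ≠ 0 := by
    filter_upwards [eventually_gt_atTop 0] with t ht using (Real.rpow_pos_of_pos ht q).ne'
  have hA : ∀ᶠ t in atTop, A t ≠ 0 := by
    filter_upwards [(hlower 1 one_pos).eq_zero_imp, hrpow_ne (p - 1)] with t himp hne hzero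
    exact hne (himp hzero)
  have hlog {ε : ℝ} (hε : 0 < ε) : Tendsto (fun t ↦ ε * Real.log t) atTop atTop :=
    Real.tendsto_log_atTop.const_mul_atTop hε
  refine tendsto_order.2 ⟨fun a ha ↦ ?_, fun a ha ↦ ?_⟩
  · have hε : 0 < (p - a) / 2 := by linarith
    filter_upwards [eventually_log_lt_log_add_of_isBigO (hlower _ hε) (hrpow_ne _) (hlog hε),
      eventually_gt_atTop 1] with t hlt ht
    rw [Real.log_rpow (by linarith)] at hlt
    rw [lt_div_iff₀ (Real.log_pos ht)]
    linarith
  · have hε : 0 < (a - p) / 2 := by linarith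
    filter_upwards [eventually_log_lt_log_add_of_isBigO (hupper _ hε) hA (hlog hε),
      eventually_gt_atTop 1] with t hlt ht
    rw [Real.log_rpow (by linarith)] at hlt
    rw [div_lt_iff₀ (Real.log_pos ht)]
    linarith

lemma tendsto_div_atTop_of_tendsto_sq {u : ℝ → ℝ} {l : ℝ} (hu : MonotoneOn u (Ici 0))
    (h : Tendsto (fun n : ℕ ↦ u ((n : ℝ) ^ 2) / (n : ℝ) ^ 2) atTop (𝓝 l)) :
    Tendsto (fun x ↦ u x / x) atTop (𝓝 l) := by
  have hrounded {N : ℝ → ℕ} (hN : Tendsto N atTop atTop)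
      (hratio : Tendsto (fun x ↦ (N x : ℝ) / x) atTop (𝓝 1)) :
      Tendsto (fun x ↦ u ((N √x : ℝ) ^ 2) / x) atTop (𝓝 l) := by
    have hprod := (h.comp (hN.comp Real.tendsto_sqrt_atTop)).mul
      ((hratio.comp Real.tendsto_sqrt_atTop).pow 2)
    rw [one_pow, mul_one] at hprod
    refine hprod.congr' ?_
    filter_upwards [eventually_gt_atTop 0,
      (hN.comp Real.tendsto_sqrt_atTop).eventually_ne_atTop 0] with x hx hNx
    have hNx' : (N √x : ℝ) ≠ 0 := Nat.cast_ne_zero.2 hNx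
    simp only [Function.comp_apply, div_pow, Real.sq_sqrt hx.le]
    field_simp
  refine tendsto_of_tendsto_of_tendsto_of_le_of_le'
    (hrounded tendsto_nat_floor_atTop tendsto_nat_floor_div_atTop)
    (hrounded tendsto_nat_ceil_atTop tendsto_nat_ceil_div_atTop) ?_ ?_
  · filter_upwards [eventually_gt_atTop 0] with x hx
    have hfloor : (⌊√x⌋₊ : ℝ) ^ 2 ≤ x :=
      (Real.le_sqrt (Nat.cast_nonneg _) hx.le).1 (Nat.floor_le (Real.sqrt_nonneg x))
    exact div_le_div_of_nonneg_right (hu (sq_nonneg (_ : ℝ)) hx.le hfloor) hx.le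
  · filter_upwards [eventually_gt_atTop 0] with x hx
    have hceil : x ≤ (⌈√x⌉₊ : ℝ) ^ 2 := (Real.sqrt_le_left (Nat.cast_nonneg _)).1 (Nat.le_ceil _)
    exact div_le_div_of_nonneg_right (hu hx.le (sq_nonneg (_ : ℝ)) hceil) hx.le

end LogGrowth

section WeightedPower

lemma intervalIntegrable_of_continuousOn_Ici {g : ℝ → ℝ} {c a b : ℝ} (hg : ContinuousOn g (Ici c))
    (ha : c ≤ a) (hb : c ≤ b) : IntervalIntegrable g volume a b :=
  (hg.mono fun _ hx ↦ (le_min ha hb).trans hx.1).intervalIntegrable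

-- On `z > η` the bound reads `z ^ (1 - α) ≤ D`, and `z ^ (1 - α)` is largest at `B` or at `η`
-- according to the sign of `1 - α`.
lemma le_add_mul_rpow {η B α z : ℝ} (hη : 0 < η) (hB : 1 ≤ B) (hα : 0 ≤ α) (hz : 0 ≤ z)
    (hzB : z ≤ B) : z ≤ η + max 1 (η ^ (1 - α)) * B * z ^ α := by
  set D := max 1 (η ^ (1 - α)) * B with hD
  have hzα : 0 ≤ D * z ^ α := by positivity
  rcases le_or_gt z η with hzη | hηz
  · linarith
  have hz0 : 0 < z := hη.trans hηz
  have hpow : z ^ (1 - α) ≤ D := by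
    rcases le_total α 1 with hα1 | hα1
    · calc z ^ (1 - α) ≤ B ^ (1 - α) := Real.rpow_le_rpow hz hzB (by linarith)
        _ ≤ B ^ (1 : ℝ) := Real.rpow_le_rpow_of_exponent_le hB (by linarith)
        _ = 1 * B := by rw [Real.rpow_one, one_mul]
        _ ≤ D := by rw [hD]; gcongr; exact le_max_left _ _
    · calc z ^ (1 - α) ≤ η ^ (1 - α) := Real.rpow_le_rpow_of_nonpos hη hηz.le (by linarith)
        _ ≤ max 1 (η ^ (1 - α)) := le_max_right _ _
        _ ≤ D := le_mul_of_one_le_right (by positivity) hB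
  calc z = z ^ (1 - α) * z ^ α := by rw [← Real.rpow_add hz0, sub_add_cancel, Real.rpow_one]
    _ ≤ D * z ^ α := by gcongr
    _ ≤ η + D * z ^ α := by linarith

variable {f : ℝ → ℝ} {α γ : ℝ}

lemma continuousOn_div_sq (hf : ContinuousOn f (Ici 1)) :
    ContinuousOn (fun s ↦ f s / s ^ 2) (Ici 1) :=
  hf.div (by fun_prop) fun _ hs ↦ (pow_pos (one_pos.trans_le hs) 2).ne'

lemma continuousOn_rpow_mul_rpow (hf : ContinuousOn f (Ici 1)) (hα : 0 ≤ α) :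
    ContinuousOn (fun s ↦ s ^ γ * f s ^ α) (Ici 1) :=
  (continuousOn_id.rpow_const fun _ hs ↦ Or.inl (one_pos.trans_le hs).ne').mul
    (hf.rpow_const fun _ _ ↦ Or.inr hα)

lemma rpow_mul_rpow_nonneg (hf_nonneg : ∀ s, 1 ≤ s → 0 ≤ f s) {s : ℝ} (hs : 1 ≤ s) :
    0 ≤ s ^ γ * f s ^ α :=
  mul_nonneg (Real.rpow_nonneg (by linarith) γ) (Real.rpow_nonneg (hf_nonneg s hs) α)

lemma integral_rpow_mul_rpow_isBigO (hf : ContinuousOn f (Ici 1))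
    (hf_nonneg : ∀ s, 1 ≤ s → 0 ≤ f s) (hα : 0 ≤ α) (hγ : -1 ≤ γ + α)
    (hgrowth : ∀ ε : ℝ, 0 < ε → ∃ K, ∀ s, 1 ≤ s → f s ≤ K * s ^ (1 + ε)) {ε : ℝ} (hε : 0 < ε) :
    (fun t ↦ ∫ s in (1 : ℝ)..t, s ^ γ * f s ^ α) =O[atTop] fun t ↦ t ^ (1 + γ + α + ε) := by
  obtain ⟨K, hK⟩ := hgrowth (ε / (α + 1)) (by positivity)
  have hK0 : 0 ≤ K := by simpa using (hf_nonneg 1 le_rfl).trans (hK 1 le_rfl)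
  set r := 1 + γ + α + ε
  have hr0 : 0 < r := by linarith
  have hbound (s : ℝ) (hs : 1 ≤ s) : s ^ γ * f s ^ α ≤ K ^ α * s ^ (r - 1) := by
    have hs0 : 0 < s := by linarith
    have hexp : γ + (1 + ε / (α + 1)) * α ≤ r - 1 := by
      have : ε / (α + 1) * α ≤ ε := by
        rw [div_mul_eq_mul_div, div_le_iff₀ (by positivity)]
        nlinarith
      linarith
    calc s ^ γ * f s ^ α ≤ s ^ γ * (K * s ^ (1 + ε / (α + 1))) ^ α := by
          gcongr
          exacts [hf_nonneg s hs, hK s hs]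
      _ = K ^ α * s ^ (γ + (1 + ε / (α + 1)) * α) := by
          rw [Real.mul_rpow hK0 (by positivity), ← Real.rpow_mul hs0.le, Real.rpow_add hs0]
          ring
      _ ≤ K ^ α * s ^ (r - 1) := by gcongr
  refine IsBigO.of_bound (K ^ α / r) ?_
  filter_upwards [eventually_ge_atTop 1] with t ht
  have hpow_int : IntervalIntegrable (fun s : ℝ ↦ s ^ (r - 1)) volume 1 t :=
    intervalIntegral.intervalIntegrable_rpow' (by linarith)
  rw [Real.norm_of_nonneg (intervalIntegral.integral_nonneg ht fun s hs ↦
    rpow_mul_rpow_nonneg hf_nonneg hs.1), Real.norm_of_nonneg (by positivity)]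
  calc ∫ s in (1 : ℝ)..t, s ^ γ * f s ^ α ≤ ∫ s in (1 : ℝ)..t, K ^ α * s ^ (r - 1) :=
        intervalIntegral.integral_mono_on ht
          (intervalIntegrable_of_continuousOn_Ici (continuousOn_rpow_mul_rpow hf hα) le_rfl ht)
          (hpow_int.const_mul _) fun s hs ↦ hbound s hs.1
    _ = K ^ α * ((t ^ r - 1) / r) := by
        rw [intervalIntegral.integral_const_mul, integral_rpow (Or.inl (by linarith)),
          sub_add_cancel, Real.one_rpow]
    _ ≤ K ^ α * (t ^ r / r) := by gcongr; linarith
    _ = K ^ α / r * t ^ r := by ring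

lemma div_sq_le_of_le_mul (hα : 0 ≤ α) (hγ : -1 ≤ γ + α) {B η a s : ℝ} (hB : 1 ≤ B) (hη : 0 < η)
    (ha : 0 < a) (has : a ≤ s) (hfs : 0 ≤ f s) (hfB : f s ≤ B * s) :
    f s / s ^ 2 ≤ η * s⁻¹ +
      max 1 (η ^ (1 - α)) * B * a ^ (-(1 + γ + α)) * (s ^ γ * f s ^ α) := by
  have hs : 0 < s := ha.trans_le has
  set D := max 1 (η ^ (1 - α)) * B
  have htrunc : f s / s ≤ η + D * (f s / s) ^ α :=
    le_add_mul_rpow hη hB hα (by positivity) ((div_le_iff₀ hs).2 hfB)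
  have hhomog : (f s / s) ^ α * s⁻¹ = s ^ (-(1 + γ + α)) * (s ^ γ * f s ^ α) := by
    rw [Real.div_rpow hfs hs.le, ← mul_assoc, ← Real.rpow_add hs,
      show -(1 + γ + α) + γ = -α + -1 by ring, Real.rpow_add hs, Real.rpow_neg hs.le,
      Real.rpow_neg_one]
    ring
  calc f s / s ^ 2 = f s / s * s⁻¹ := by field_simp
    _ ≤ (η + D * (f s / s) ^ α) * s⁻¹ := by gcongr
    _ = η * s⁻¹ + D * ((f s / s) ^ α * s⁻¹) := by ring
    _ = η * s⁻¹ + D * s ^ (-(1 + γ + α)) * (s ^ γ * f s ^ α) := by rw [hhomog]; ring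
    _ ≤ η * s⁻¹ + D * a ^ (-(1 + γ + α)) * (s ^ γ * f s ^ α) := by
        have := Real.rpow_le_rpow_of_nonpos ha has (show -(1 + γ + α) ≤ 0 by linarith)
        gcongr

lemma integral_div_sq_le_of_le_mul (hf : ContinuousOn f (Ici 1))
    (hf_nonneg : ∀ s, 1 ≤ s → 0 ≤ f s) (hα : 0 ≤ α) (hγ : -1 ≤ γ + α) {B η a t : ℝ} (hB : 1 ≤ B)
    (hη : 0 < η) (ha : 1 ≤ a) (hat : a ≤ t) (hfB : ∀ s ∈ Icc a t, f s ≤ B * s) :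
    ∫ s in a..t, f s / s ^ 2 ≤ η * Real.log (t / a) +
      max 1 (η ^ (1 - α)) * B * a ^ (-(1 + γ + α)) * ∫ s in (1 : ℝ)..t, s ^ γ * f s ^ α := by
  have ht : 1 ≤ t := ha.trans hat
  set D := max 1 (η ^ (1 - α)) * B * a ^ (-(1 + γ + α))
  have hcont := continuousOn_rpow_mul_rpow (γ := γ) hf hα
  have hint := (intervalIntegrable_of_continuousOn_Ici hcont ha ht).const_mul D
  have hinv : IntervalIntegrable (fun s : ℝ ↦ η * s⁻¹) volume a t :=
    intervalIntegrable_of_continuousOn_Ici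
      (continuousOn_const.mul (continuousOn_inv₀.mono fun s hs ↦ (one_pos.trans_le hs).ne')) ha ht
  calc ∫ s in a..t, f s / s ^ 2
      ≤ ∫ s in a..t, (η * s⁻¹ + D * (s ^ γ * f s ^ α)) := by
        refine intervalIntegral.integral_mono_on hat
          (intervalIntegrable_of_continuousOn_Ici (continuousOn_div_sq hf) ha ht)
          (hinv.add hint) fun s hs ↦ ?_
        exact div_sq_le_of_le_mul hα hγ hB hη (by linarith) hs.1 (hf_nonneg s (ha.trans hs.1))
          (hfB s hs)
    _ = η * Real.log (t / a) + D * ∫ s in a..t, s ^ γ * f s ^ α := by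
        rw [intervalIntegral.integral_add hinv hint, intervalIntegral.integral_const_mul,
          intervalIntegral.integral_const_mul, integral_inv_of_pos (by linarith) (by linarith)]
    _ ≤ η * Real.log (t / a) + D * ∫ s in (1 : ℝ)..t, s ^ γ * f s ^ α := by
        gcongr
        refine intervalIntegral.integral_mono_interval ha hat le_rfl ?_
          (intervalIntegrable_of_continuousOn_Ici hcont le_rfl ht)
        filter_upwards [ae_restrict_mem measurableSet_Ioc] with s hs
        exact rpow_mul_rpow_nonneg hf_nonneg hs.1.le

lemma tendsto_integral_from_rpow_div_log {δ θ : ℝ} {g : ℝ → ℝ} (hg : ContinuousOn g (Ici 1))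
    (hθ : θ < 1) (h : Tendsto (fun t ↦ (∫ s in (1 : ℝ)..t, g s) / Real.log t) atTop (𝓝 δ)) :
    Tendsto (fun t ↦ (∫ s in (t ^ (1 - θ))..t, g s) / Real.log t) atTop (𝓝 (δ * θ)) := by
  have hstart := (h.comp (tendsto_rpow_atTop (sub_pos.2 hθ))).mul_const (1 - θ)
  have hdiff := h.sub hstart
  rw [show δ - δ * (1 - θ) = δ * θ by ring] at hdiff
  refine hdiff.congr' ?_
  filter_upwards [eventually_gt_atTop 1] with t ht
  have hstart_ge : 1 ≤ t ^ (1 - θ) := Real.one_le_rpow ht.le (by linarith)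
  have hlog : Real.log t ≠ 0 := (Real.log_pos ht).ne'
  have hθ' : 1 - θ ≠ 0 := by linarith
  rw [← intervalIntegral.integral_interval_sub_left
    (intervalIntegrable_of_continuousOn_Ici hg le_rfl ht.le)
    (intervalIntegrable_of_continuousOn_Ici hg le_rfl hstart_ge)]
  simp only [Function.comp_apply, Real.log_rpow (show 0 < t by linarith)]
  field_simp

lemma integral_div_sq_le_of_le_mul_rpow (hf : ContinuousOn f (Ici 1))
    (hf_nonneg : ∀ s, 1 ≤ s → 0 ≤ f s) (hα : 0 ≤ α) (hγ : -1 ≤ γ + α) {K θ η t : ℝ}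
    (hfK : ∀ s, 1 ≤ s → f s ≤ K * s ^ (1 + θ)) (hθ0 : 0 ≤ θ) (hθ1 : θ ≤ 1) (hη : 0 < η)
    (ht : 1 ≤ t) :
    ∫ s in (t ^ (1 - θ))..t, f s / s ^ 2 ≤ η * (θ * Real.log t) +
      max 1 (η ^ (1 - α)) * max 1 K *
        ((∫ s in (1 : ℝ)..t, s ^ γ * f s ^ α) / t ^ ((1 - θ) * (1 + γ + α) - θ)) := by
  have ht0 : 0 < t := one_pos.trans_le ht
  have hstart : 1 ≤ t ^ (1 - θ) := Real.one_le_rpow ht (by linarith)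
  have hfB (s : ℝ) (hs : s ∈ Icc (t ^ (1 - θ)) t) : f s ≤ max 1 K * t ^ θ * s := by
    have hs0 : 0 < s := by linarith [hs.1]
    calc f s ≤ K * s ^ (1 + θ) := hfK s (hstart.trans hs.1)
      _ = K * s ^ θ * s := by rw [Real.rpow_add hs0, Real.rpow_one]; ring
      _ ≤ max 1 K * t ^ θ * s := by gcongr; exacts [le_max_right _ _, hs.2]
  have hlog : Real.log (t / t ^ (1 - θ)) = θ * Real.log t := by
    rw [Real.log_div ht0.ne' (by positivity), Real.log_rpow ht0]
    ring
  have hpow : t ^ θ * (t ^ (1 - θ)) ^ (-(1 + γ + α)) = (t ^ ((1 - θ) * (1 + γ + α) - θ))⁻¹ := by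
    rw [← Real.rpow_mul ht0.le, ← Real.rpow_add ht0, ← Real.rpow_neg ht0.le]
    ring_nf
  refine (integral_div_sq_le_of_le_mul hf hf_nonneg hα hγ
    (one_le_mul_of_one_le_of_one_le (le_max_left 1 K) (Real.one_le_rpow ht hθ0)) hη hstart
    (Real.rpow_le_self_of_one_le ht (by linarith)) hfB).trans_eq ?_
  rw [hlog, div_eq_mul_inv, ← hpow]
  ring

-- On `[t ^ (1 - θ), t]` the integral of `f s / s ^ 2` is about `δ θ log t`; truncating `f s / s` at
-- height `δ / 2` loses at most half of it, and the rest is controlled by the weighted integral.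
lemma rpow_isBigO_integral_rpow_mul_rpow (hf : ContinuousOn f (Ici 1))
    (hf_nonneg : ∀ s, 1 ≤ s → 0 ≤ f s) (hα : 0 ≤ α) (hγ : -1 ≤ γ + α)
    (hgrowth : ∀ ε : ℝ, 0 < ε → ∃ K, ∀ s, 1 ≤ s → f s ≤ K * s ^ (1 + ε)) {δ : ℝ} (hδ : 0 < δ)
    (haverage : Tendsto (fun t ↦ (∫ s in (1 : ℝ)..t, f s / s ^ 2) / Real.log t) atTop (𝓝 δ))
    {θ : ℝ} (hθ0 : 0 < θ) (hθ1 : θ < 1) :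
    (fun t ↦ t ^ ((1 - θ) * (1 + γ + α) - θ)) =O[atTop]
      fun t ↦ ∫ s in (1 : ℝ)..t, s ^ γ * f s ^ α := by
  obtain ⟨K, hK⟩ := hgrowth θ hθ0
  set D := max 1 ((δ / 2) ^ (1 - α)) * max 1 K
  have hδθ : 0 < δ * θ := mul_pos hδ hθ0
  have hmain : ∀ᶠ t in atTop, 3 / 4 * (δ * θ) <
      (∫ s in (t ^ (1 - θ))..t, f s / s ^ 2) / Real.log t :=
    (tendsto_integral_from_rpow_div_log (continuousOn_div_sq hf) hθ1 haverage).eventually_const_lt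
      (by linarith)
  refine IsBigO.of_bound (4 / (δ * θ) * D) ?_
  filter_upwards [hmain, eventually_gt_atTop 1, Real.tendsto_log_atTop.eventually_ge_atTop 1]
    with t hmain_t ht hlog
  have hstep := integral_div_sq_le_of_le_mul_rpow (γ := γ) hf hf_nonneg hα hγ hK hθ0.le hθ1.le
    (half_pos hδ) ht.le
  rw [lt_div_iff₀ (by linarith)] at hmain_t
  have hkey : δ * θ / 4 ≤ D * ((∫ s in (1 : ℝ)..t, s ^ γ * f s ^ α) /
      t ^ ((1 - θ) * (1 + γ + α) - θ)) := by
    nlinarith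
  rw [Real.norm_of_nonneg (by positivity), Real.norm_of_nonneg
    (intervalIntegral.integral_nonneg ht.le fun s hs ↦ rpow_mul_rpow_nonneg hf_nonneg hs.1)]
  have hpos : 0 < t ^ ((1 - θ) * (1 + γ + α) - θ) := by positivity
  rw [← mul_div_assoc, le_div_iff₀ hpos] at hkey
  rw [div_mul_eq_mul_div, div_mul_eq_mul_div, le_div_iff₀ hδθ]
  linarith

lemma tendsto_log_integral_rpow_mul_rpow_div_log (hf : ContinuousOn f (Ici 1))
    (hf_nonneg : ∀ s, 1 ≤ s → 0 ≤ f s) (hα : 0 ≤ α) (hγ : -1 ≤ γ + α)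
    (hgrowth : ∀ ε : ℝ, 0 < ε → ∃ K, ∀ s, 1 ≤ s → f s ≤ K * s ^ (1 + ε)) {δ : ℝ} (hδ : 0 < δ)
    (haverage : Tendsto (fun t ↦ (∫ s in (1 : ℝ)..t, f s / s ^ 2) / Real.log t) atTop (𝓝 δ)) :
    Tendsto (fun t ↦ Real.log (∫ s in (1 : ℝ)..t, s ^ γ * f s ^ α) / Real.log t) atTop
      (𝓝 (1 + γ + α)) := by
  refine tendsto_log_div_log_of_isBigO_rpow (fun ε hε ↦ ?_)
    fun ε hε ↦ integral_rpow_mul_rpow_isBigO hf hf_nonneg hα hγ hgrowth hε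
  have hp : 0 < 2 + γ + α := by linarith
  have hθ0 : 0 < min (1 / 2) (ε / (2 + γ + α)) := by positivity
  have hθε : min (1 / 2) (ε / (2 + γ + α)) * (2 + γ + α) ≤ ε :=
    (le_div_iff₀ hp).1 (min_le_right _ _)
  refine IsBigO.trans (IsBigO.of_bound 1 ?_) <|
    rpow_isBigO_integral_rpow_mul_rpow hf hf_nonneg hα hγ hgrowth hδ haverage hθ0
      ((min_le_left _ _).trans_lt (by norm_num))
  filter_upwards [eventually_ge_atTop 1] with t ht
  rw [one_mul, Real.norm_of_nonneg (by positivity), Real.norm_of_nonneg (by positivity)]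
  exact Real.rpow_le_rpow_of_exponent_le ht (by linarith)

end WeightedPower

section ProductIntegral

variable {Ω S : Type*} {m : MeasurableSpace Ω} {mS : MeasurableSpace S} {μ : Measure Ω}
  {ν : Measure S} {g : S → Ω → ℝ} {C : ℝ}

lemma integral_norm_mul_le_of_integral_sq_le {f h : Ω → ℝ} (hf : MemLp f 2 μ) (hh : MemLp h 2 μ)
    (hfC : ∫ ω, f ω ^ 2 ∂μ ≤ C) (hhC : ∫ ω, h ω ^ 2 ∂μ ≤ C) : ∫ ω, ‖f ω * h ω‖ ∂μ ≤ C := by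
  calc ∫ ω, ‖f ω * h ω‖ ∂μ ≤ ∫ ω, (f ω ^ 2 + h ω ^ 2) / 2 ∂μ := by
        refine integral_mono (hf.integrable_mul hh).norm
          ((hf.integrable_sq.add hh.integrable_sq).div_const 2) fun ω ↦ ?_
        simp only [norm_mul, Real.norm_eq_abs]
        nlinarith [sq_nonneg (|f ω| - |h ω|), sq_abs (f ω), sq_abs (h ω)]
    _ = ((∫ ω, f ω ^ 2 ∂μ) + ∫ ω, h ω ^ 2 ∂μ) / 2 := by
        rw [integral_div, integral_add hf.integrable_sq hh.integrable_sq]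
    _ ≤ C := by linarith

variable [SFinite μ] [IsFiniteMeasure ν]

lemma integrable_prod_of_ae_integral_norm_le {E : Type*} [NormedAddCommGroup E] {F : Ω × S → E}
    (hF : AEStronglyMeasurable F (μ.prod ν))
    (hint : ∀ᵐ s ∂ν, Integrable (fun ω ↦ F (ω, s)) μ)
    (hC : ∀ᵐ s ∂ν, ∫ ω, ‖F (ω, s)‖ ∂μ ≤ C) : Integrable F (μ.prod ν) := by
  refine (integrable_prod_iff' hF).2
    ⟨hint, (integrable_const C).mono' hF.prod_swap.norm.integral_prod_right' ?_⟩
  filter_upwards [hC] with s hs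
  rwa [Real.norm_of_nonneg (integral_nonneg fun ω ↦ norm_nonneg _)]

lemma integrable_mul_prod_of_ae_integral_sq_le (hg : StronglyMeasurable (Function.uncurry g))
    (hL2 : ∀ s, MemLp (g s) 2 μ) (hC : ∀ᵐ s ∂ν, ∫ ω, g s ω ^ 2 ∂μ ≤ C) :
    Integrable (fun z : Ω × S × S ↦ g z.2.1 z.1 * g z.2.2 z.1) (μ.prod (ν.prod ν)) := by
  have hmeas : StronglyMeasurable fun z : Ω × S × S ↦ g z.2.1 z.1 * g z.2.2 z.1 :=
    (hg.comp_measurable (measurable_snd.fst.prodMk measurable_fst)).mul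
      (hg.comp_measurable (measurable_snd.snd.prodMk measurable_fst))
  refine integrable_prod_of_ae_integral_norm_le hmeas.aestronglyMeasurable
    (ae_of_all _ fun z ↦ (hL2 z.1).integrable_mul (hL2 z.2)) (C := C) ?_
  filter_upwards [Measure.quasiMeasurePreserving_fst.ae hC,
    Measure.quasiMeasurePreserving_snd.ae hC] with z hz₁ hz₂
  exact integral_norm_mul_le_of_integral_sq_le (hL2 z.1) (hL2 z.2) hz₁ hz₂

lemma sq_integral_eq_integral_prod (ω : Ω) :
    (∫ s, g s ω ∂ν) ^ 2 = ∫ z, g z.1 ω * g z.2 ω ∂(ν.prod ν) := by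
  rw [sq, integral_prod_mul (fun s ↦ g s ω) fun s ↦ g s ω]

lemma integrable_sq_integral (hg : StronglyMeasurable (Function.uncurry g))
    (hL2 : ∀ s, MemLp (g s) 2 μ) (hC : ∀ᵐ s ∂ν, ∫ ω, g s ω ^ 2 ∂μ ≤ C) :
    Integrable (fun ω ↦ (∫ s, g s ω ∂ν) ^ 2) μ := by
  simp only [sq_integral_eq_integral_prod]
  exact (integrable_mul_prod_of_ae_integral_sq_le hg hL2 hC).integral_prod_left

lemma integral_sq_integral (hg : StronglyMeasurable (Function.uncurry g))
    (hL2 : ∀ s, MemLp (g s) 2 μ) (hC : ∀ᵐ s ∂ν, ∫ ω, g s ω ^ 2 ∂μ ≤ C) :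
    ∫ ω, (∫ s, g s ω ∂ν) ^ 2 ∂μ = ∫ s, ∫ u, ∫ ω, g s ω * g u ω ∂μ ∂ν ∂ν := by
  have hint := integrable_mul_prod_of_ae_integral_sq_le hg hL2 hC
  simp only [sq_integral_eq_integral_prod]
  rw [integral_integral_swap hint, integral_prod _ hint.integral_prod_right]

end ProductIntegral

section SlowSecondMoment

lemma integral_one_div_max_sq_le {s T : ℝ} (hs : 1 ≤ s) (hsT : s ≤ T) :
    ∫ u in (1 : ℝ)..T, 1 / max s u ^ 2 ≤ 2 * s⁻¹ := by
  have hs0 : 0 < s := by linarith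
  have hcont : Continuous fun u : ℝ ↦ 1 / max s u ^ 2 :=
    continuous_const.div (by fun_prop) fun u ↦ (pow_pos (lt_max_of_lt_left hs0) 2).ne'
  have hleft : ∫ u in (1 : ℝ)..s, 1 / max s u ^ 2 = (s - 1) * (1 / s ^ 2) := by
    rw [intervalIntegral.integral_congr (g := fun _ ↦ 1 / s ^ 2), intervalIntegral.integral_const,
      smul_eq_mul]
    intro u hu
    rw [uIcc_of_le hs] at hu
    simp only [max_eq_left hu.2]
  have hright : ∫ u in s..T, 1 / max s u ^ 2 = s⁻¹ - T⁻¹ := by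
    have hzero : (0 : ℝ) ∉ uIcc s T := fun h ↦ by linarith [(uIcc_of_le hsT ▸ h).1]
    rw [intervalIntegral.integral_congr (g := fun u ↦ u ^ (-2 : ℤ)),
      integral_zpow (Or.inr ⟨by norm_num, hzero⟩)]
    · norm_num
      ring
    · intro u hu
      rw [uIcc_of_le hsT] at hu
      simp only [max_eq_right hu.1, zpow_neg, one_div]
      norm_cast
  have hleft_le : (s - 1) * (1 / s ^ 2) ≤ s⁻¹ := by
    calc (s - 1) * (1 / s ^ 2) ≤ s * (1 / s ^ 2) := by gcongr; linarith
      _ = s⁻¹ := by field_simp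
  have hT : 0 ≤ T⁻¹ := inv_nonneg.2 (by linarith)
  rw [← intervalIntegral.integral_add_adjacent_intervals (hcont.intervalIntegrable 1 s)
    (hcont.intervalIntegrable s T), hleft, hright]
  linarith

variable {Ω : Type*} {m : MeasurableSpace Ω} {μ : Measure Ω} {g : ℝ → Ω → ℝ} {C T : ℝ}

lemma integral_mul_le_div_max_sq
    (hcov : ∀ s u, 1 ≤ s → s ≤ u → ∫ ω, g s ω * g u ω ∂μ ≤ C / u ^ 2) {s u : ℝ} (hs : 1 ≤ s)
    (hu : 1 ≤ u) : ∫ ω, g s ω * g u ω ∂μ ≤ C * (1 / max s u ^ 2) := by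
  rw [mul_one_div]
  rcases le_total s u with hsu | hus
  · rw [max_eq_right hsu]
    exact hcov s u hs hsu
  · rw [max_eq_left hus]
    simpa only [mul_comm (g s _)] using hcov u s hu hus

lemma nonneg_of_integral_mul_le_div_sq
    (hcov : ∀ s u, 1 ≤ s → s ≤ u → ∫ ω, g s ω * g u ω ∂μ ≤ C / u ^ 2) : 0 ≤ C := by
  simpa using (integral_nonneg fun ω ↦ mul_self_nonneg (g 1 ω)).trans (hcov 1 1 le_rfl le_rfl)

lemma integral_sq_le_of_integral_mul_le_div_sq
    (hcov : ∀ s u, 1 ≤ s → s ≤ u → ∫ ω, g s ω * g u ω ∂μ ≤ C / u ^ 2) :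
    ∀ᵐ s ∂volume.restrict (Ioc 1 T), ∫ ω, g s ω ^ 2 ∂μ ≤ C := by
  filter_upwards [ae_restrict_mem measurableSet_Ioc] with s hs
  simp only [sq (g s _)]
  exact (hcov s s hs.1.le le_rfl).trans
    (div_le_self (nonneg_of_integral_mul_le_div_sq hcov) (one_le_pow₀ hs.1.le))

variable [SFinite μ]

lemma integrable_sq_intervalIntegral_of_integral_mul_le_div_sq
    (hg : StronglyMeasurable (Function.uncurry g)) (hL2 : ∀ s, MemLp (g s) 2 μ) (hT : 1 ≤ T)
    (hcov : ∀ s u, 1 ≤ s → s ≤ u → ∫ ω, g s ω * g u ω ∂μ ≤ C / u ^ 2) :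
    Integrable (fun ω ↦ (∫ s in (1 : ℝ)..T, g s ω) ^ 2) μ := by
  simp only [intervalIntegral.integral_of_le hT]
  exact integrable_sq_integral hg hL2 (integral_sq_le_of_integral_mul_le_div_sq hcov)

lemma integral_sq_intervalIntegral_le_of_integral_mul_le_div_sq
    (hg : StronglyMeasurable (Function.uncurry g)) (hL2 : ∀ s, MemLp (g s) 2 μ) (hT : 1 ≤ T)
    (hcov : ∀ s u, 1 ≤ s → s ≤ u → ∫ ω, g s ω * g u ω ∂μ ≤ C / u ^ 2) :
    ∫ ω, (∫ s in (1 : ℝ)..T, g s ω) ^ 2 ∂μ ≤ 2 * C * Real.log T := by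
  have hC := nonneg_of_integral_mul_le_div_sq hcov
  have hsq := integral_sq_le_of_integral_mul_le_div_sq (T := T) hcov
  set ν : Measure ℝ := volume.restrict (Ioc 1 T)
  have hmem : ∀ᵐ s ∂ν, s ∈ Ioc 1 T := ae_restrict_mem measurableSet_Ioc
  have hcov_int := (integrable_mul_prod_of_ae_integral_sq_le hg hL2 hsq).integral_prod_right
  have hinner : ∀ᵐ s ∂ν, ∫ u, ∫ ω, g s ω * g u ω ∂μ ∂ν ≤ 2 * C * s⁻¹ := by
    filter_upwards [hmem, hcov_int.prod_right_ae] with s hs hs_int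
    have hmax_int : Integrable (fun u ↦ C * (1 / max s u ^ 2)) ν := by
      have hcont : Continuous fun u : ℝ ↦ C * (1 / max s u ^ 2) :=
        continuous_const.mul <| continuous_const.div (by fun_prop) fun u ↦
          (pow_pos (lt_max_of_lt_left (one_pos.trans hs.1)) 2).ne'
      exact (hcont.intervalIntegrable 1 T).1
    calc ∫ u, ∫ ω, g s ω * g u ω ∂μ ∂ν ≤ ∫ u, C * (1 / max s u ^ 2) ∂ν := by
          refine integral_mono_ae hs_int hmax_int ?_
          filter_upwards [hmem] with u hu
          exact integral_mul_le_div_max_sq hcov hs.1.le hu.1.le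
      _ = C * ∫ u in (1 : ℝ)..T, 1 / max s u ^ 2 := by
          rw [integral_const_mul, intervalIntegral.integral_of_le hT]
      _ ≤ C * (2 * s⁻¹) := by gcongr; exact integral_one_div_max_sq_le hs.1.le hs.2
      _ = 2 * C * s⁻¹ := by ring
  have hinv_int : IntervalIntegrable (fun s : ℝ ↦ 2 * C * s⁻¹) volume 1 T :=
    intervalIntegrable_of_continuousOn_Ici (continuousOn_const.mul
      (continuousOn_inv₀.mono fun s hs ↦ (one_pos.trans_le hs).ne')) le_rfl hT
  calc ∫ ω, (∫ s in (1 : ℝ)..T, g s ω) ^ 2 ∂μ = ∫ s, ∫ u, ∫ ω, g s ω * g u ω ∂μ ∂ν ∂ν := by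
        simp only [intervalIntegral.integral_of_le hT]
        exact integral_sq_integral hg hL2 hsq
    _ ≤ ∫ s, 2 * C * s⁻¹ ∂ν := integral_mono_ae hcov_int.integral_prod_left hinv_int.1 hinner
    _ = 2 * C * Real.log T := by
        rw [← intervalIntegral.integral_of_le hT, intervalIntegral.integral_const_mul,
          integral_inv_of_pos one_pos (by linarith), div_one]

end SlowSecondMoment

section Martingale

variable {Ω ι κ : Type*} {m : MeasurableSpace Ω} [Preorder ι] [Preorder κ] {μ : Measure Ω}

/-- The filtration `ℱ` observed along a monotone time change `φ`; it restricts a filtration to a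
grid, or to the nonnegative half-line. -/
def timeChange (ℱ : Filtration ι m) {φ : κ → ι} (hφ : Monotone φ) : Filtration κ m where
  seq k := ℱ (φ k)
  mono' _ _ h := ℱ.mono (hφ h)
  le' k := ℱ.le (φ k)

lemma submartingale_timeChange {Z : ι → Ω → ℝ} {ℱ : Filtration ι m} (hZ : Submartingale Z ℱ μ)
    {φ : κ → ι} (hφ : Monotone φ) : Submartingale (fun k ↦ Z (φ k)) (timeChange ℱ hφ) μ :=
  ⟨fun k ↦ hZ.stronglyMeasurable (φ k), fun _ _ h ↦ hZ.ae_le_condExp (hφ h),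
    fun k ↦ hZ.integrable (φ k)⟩

lemma martingale_integral_mul_eq_integral_sq [IsFiniteMeasure μ] {M : ι → Ω → ℝ}
    {ℱ : Filtration ι m} (hM : Martingale M ℱ μ) (hL2 : ∀ t, MemLp (M t) 2 μ) {s t : ι}
    (hst : s ≤ t) : ∫ ω, M s ω * M t ω ∂μ = ∫ ω, M s ω ^ 2 ∂μ := by
  have hpull := condExp_mul_of_stronglyMeasurable_left (hM.stronglyMeasurable s)
    ((hL2 s).integrable_mul (hL2 t)) (hM.integrable t)
  calc ∫ ω, M s ω * M t ω ∂μ = ∫ ω, (μ[M s * M t | ℱ s]) ω ∂μ := (integral_condExp (ℱ.le s)).symm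
    _ = ∫ ω, M s ω ^ 2 ∂μ := by
        refine integral_congr_ae ?_
        filter_upwards [hpull, hM.condExp_ae_eq hst] with ω hω hMω
        rw [hω, Pi.mul_apply, hMω, sq]

lemma submartingale_measure_exists_lt_nat_le [IsFiniteMeasure μ] {Z : ℕ → Ω → ℝ}
    {ℱ : Filtration ℕ m} (hZ : Submartingale Z ℱ μ) (hZ_nonneg : 0 ≤ Z) {c : ℝ} (hc : 0 < c)
    (n : ℕ) : μ {ω | ∃ k ≤ n, c < Z k ω} ≤ ENNReal.ofReal ((∫ ω, Z n ω ∂μ) / c) := by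
  lift c to ℝ≥0 using hc.le
  set S := {ω | (c : ℝ) ≤ (Finset.range (n + 1)).sup' Finset.nonempty_range_add_one fun k ↦ Z k ω}
  have hsubset : {ω | ∃ k ≤ n, c < Z k ω} ⊆ S := by
    rintro ω ⟨k, hk, hlt⟩
    exact hlt.le.trans
      (Finset.le_sup' (fun k ↦ Z k ω) (Finset.mem_range.2 (Nat.lt_succ_of_le hk)))
  rw [ENNReal.ofReal_div_of_pos hc, ENNReal.ofReal_coe_nnreal, ENNReal.le_div_iff_mul_le
    (Or.inl (by simpa using hc.ne')) (Or.inl ENNReal.coe_ne_top), mul_comm]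
  calc c * μ {ω | ∃ k ≤ n, c < Z k ω} ≤ c * μ S := by gcongr
    _ ≤ ENNReal.ofReal (∫ ω in S, Z n ω ∂μ) := maximal_ineq hZ hZ_nonneg n
    _ ≤ ENNReal.ofReal (∫ ω, Z n ω ∂μ) := ENNReal.ofReal_le_ofReal <|
        setIntegral_le_integral (hZ.integrable n) (ae_of_all _ (hZ_nonneg n))

lemma exists_dyadic_mul_mem {T s : ℝ≥0} (hsT : s ≤ T) {U : Set ℝ≥0} (hU : U ∈ 𝓝 s) :
    ∃ j k : ℕ, k ≤ 2 ^ j ∧ k * (T / 2 ^ j) ∈ U := by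
  rcases eq_zero_or_pos T with rfl | hT
  · exact ⟨0, 0, Nat.zero_le _, by simpa [le_zero_iff.1 hsT] using mem_of_mem_nhds hU⟩
  have hpow : Tendsto (fun j : ℕ ↦ (2 : ℝ) ^ j) atTop atTop :=
    tendsto_pow_atTop_atTop_of_one_lt (by norm_num)
  have hlim : Tendsto (fun j : ℕ ↦ (⌊(s / T : ℝ) * 2 ^ j⌋₊ : ℝ≥0) * (T / 2 ^ j)) atTop (𝓝 s) := by
    have hfloor := ((tendsto_nat_floor_mul_div_atTop (R := ℝ) (a := s / T)
      (by positivity)).comp hpow).mul_const (T : ℝ)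
    rw [div_mul_cancel₀ _ (NNReal.coe_ne_zero.2 hT.ne')] at hfloor
    refine NNReal.tendsto_coe.1 (hfloor.congr fun j ↦ ?_)
    simp only [Function.comp_apply]
    push_cast
    ring
  obtain ⟨j, hj⟩ := (hlim.eventually hU).exists
  refine ⟨j, _, Nat.floor_le_of_le ?_, hj⟩
  push_cast
  exact mul_le_of_le_one_left (by positivity) (div_le_one_of_le₀ (mod_cast hsT) T.coe_nonneg)

lemma submartingale_measure_exists_lt_le [IsFiniteMeasure μ] {Z : ℝ≥0 → Ω → ℝ}
    {ℱ : Filtration ℝ≥0 m} (hZ : Submartingale Z ℱ μ) (hZ_nonneg : 0 ≤ Z)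
    (hZ_cont : ∀ ω, Continuous fun t ↦ Z t ω) {c : ℝ} (hc : 0 < c) (T : ℝ≥0) :
    μ {ω | ∃ s ≤ T, c < Z s ω} ≤ ENNReal.ofReal ((∫ ω, Z T ω ∂μ) / c) := by
  set S : ℕ → Set Ω := fun j ↦ {ω | ∃ k : ℕ, k ≤ 2 ^ j ∧ c < Z (k * (T / 2 ^ j)) ω}
  have hS_mono : Monotone S := by
    refine monotone_nat_of_le_succ ?_
    rintro j ω ⟨k, hk, hlt⟩
    refine ⟨2 * k, by rw [pow_succ]; omega, ?_⟩
    convert hlt using 2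
    push_cast
    rw [pow_succ]
    field_simp
  have hsubset : {ω | ∃ s ≤ T, c < Z s ω} ⊆ ⋃ j, S j := by
    rintro ω ⟨s, hsT, hlt⟩
    obtain ⟨j, k, hk, hmem⟩ :=
      exists_dyadic_mul_mem hsT ((isOpen_lt continuous_const (hZ_cont ω)).mem_nhds hlt)
    exact mem_iUnion.2 ⟨j, k, hk, hmem⟩
  refine (measure_mono hsubset).trans ?_
  rw [hS_mono.measure_iUnion]
  refine iSup_le fun j ↦ ?_
  have hgrid : Monotone fun k : ℕ ↦ (k : ℝ≥0) * (T / 2 ^ j) :=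
    Nat.mono_cast.mul_const (by positivity)
  have hend : ((2 ^ j : ℕ) : ℝ≥0) * (T / 2 ^ j) = T := by
    push_cast
    field_simp
  have hbound := submartingale_measure_exists_lt_nat_le (submartingale_timeChange hZ hgrid)
    (fun k ↦ hZ_nonneg _) hc (2 ^ j)
  rwa [hend] at hbound

lemma ae_tendsto_zero_of_summable_integral {f : ℕ → Ω → ℝ} (hf : ∀ n, Integrable (f n) μ)
    (hf_nonneg : ∀ n, 0 ≤ f n) (hsum : Summable fun n ↦ ∫ ω, f n ω ∂μ) :
    ∀ᵐ ω ∂μ, Tendsto (fun n ↦ f n ω) atTop (𝓝 0) := by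
  have hmeas (n : ℕ) : AEMeasurable (fun ω ↦ ENNReal.ofReal (f n ω)) μ :=
    (hf n).aemeasurable.ennreal_ofReal
  have hfinite : ∫⁻ ω, ∑' n, ENNReal.ofReal (f n ω) ∂μ ≠ ⊤ := by
    rw [lintegral_tsum hmeas]
    simp only [← ofReal_integral_eq_lintegral_ofReal (hf _) (ae_of_all _ (hf_nonneg _))]
    exact hsum.tsum_ofReal_ne_top
  filter_upwards [ae_lt_top' (AEMeasurable.tsum hmeas) hfinite] with ω hω
  have hlim := (ENNReal.tendsto_toReal ENNReal.zero_ne_top).comp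
    (ENNReal.tendsto_atTop_zero_of_tsum_ne_top hω.ne)
  exact hlim.congr fun n ↦ ENNReal.toReal_ofReal (hf_nonneg n ω)

end Martingale

section ExponentialGrid

lemma exists_le_mul_rpow_of_eventually_le_exp_rpow {f : ℝ → ℝ} {p : ℝ} (hp : 0 ≤ p)
    (h : ∀ᶠ n : ℕ in atTop, ∀ s ∈ Icc 0 (Real.exp n), f s ≤ Real.exp n ^ p) :
    ∃ K, ∀ s, 1 ≤ s → f s ≤ K * s ^ p := by
  obtain ⟨N, hN⟩ := eventually_atTop.1 h
  refine ⟨Real.exp (N + 1) ^ p, fun s hs ↦ ?_⟩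
  have hs0 : 0 < s := by linarith
  have hle : s ≤ Real.exp ((N + ⌈Real.log s⌉₊ : ℕ) : ℝ) := by
    rw [← Real.log_le_iff_le_exp hs0]
    push_cast
    linarith [Nat.le_ceil (Real.log s), N.cast_nonneg (α := ℝ)]
  calc f s ≤ Real.exp ((N + ⌈Real.log s⌉₊ : ℕ) : ℝ) ^ p := hN _ (by omega) s ⟨hs0.le, hle⟩
    _ ≤ (Real.exp (N + 1) * s) ^ p := by
        gcongr
        rw [← Real.le_log_iff_exp_le (by positivity), Real.log_mul (Real.exp_ne_zero _) hs0.ne',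
          Real.log_exp]
        push_cast
        linarith [Nat.ceil_lt_add_one (Real.log_nonneg hs)]
    _ = Real.exp (N + 1) ^ p * s ^ p := Real.mul_rpow (Real.exp_pos _).le hs0.le

variable {f : ℝ → ℝ} {y δ : ℝ}

lemma integral_div_sq_eq (hf : ContinuousOn f (Ici 1)) {T : ℝ} (hT : 1 ≤ T) :
    ∫ s in (1 : ℝ)..T, f s / s ^ 2 =
      (∫ s in (1 : ℝ)..T, (f s - y - δ * s) / s ^ 2) + y * (1 - T⁻¹) + δ * Real.log T := by
  have hne (s : ℝ) (hs : s ∈ uIcc 1 T) : s ≠ 0 := by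
    rw [uIcc_of_le hT] at hs
    linarith [hs.1]
  have hzero : (0 : ℝ) ∉ uIcc 1 T := fun h ↦ hne 0 h rfl
  have hcomp_int : IntervalIntegrable (fun s ↦ (f s - y - δ * s) / s ^ 2) volume 1 T :=
    intervalIntegrable_of_continuousOn_Ici (continuousOn_div_sq (by fun_prop)) le_rfl hT
  have hsq_int : IntervalIntegrable (fun s : ℝ ↦ y * s ^ (-2 : ℤ)) volume 1 T :=
    (continuousOn_const.mul (continuousOn_id.zpow₀ _ fun s hs ↦
      Or.inl (hne s hs))).intervalIntegrable
  have hinv_int : IntervalIntegrable (fun s : ℝ ↦ δ * s⁻¹) volume 1 T :=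
    (continuousOn_const.mul (continuousOn_id.inv₀ hne)).intervalIntegrable
  calc ∫ s in (1 : ℝ)..T, f s / s ^ 2
      = ∫ s in (1 : ℝ)..T, ((f s - y - δ * s) / s ^ 2 + y * s ^ (-2 : ℤ) + δ * s⁻¹) := by
        refine intervalIntegral.integral_congr fun s hs ↦ ?_
        have := hne s hs
        simp only [zpow_neg]
        norm_cast
        field_simp
        ring
    _ = (∫ s in (1 : ℝ)..T, (f s - y - δ * s) / s ^ 2) + y * (1 - T⁻¹) + δ * Real.log T := by
        rw [intervalIntegral.integral_add (hcomp_int.add hsq_int) hinv_int,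
          intervalIntegral.integral_add hcomp_int hsq_int, intervalIntegral.integral_const_mul,
          intervalIntegral.integral_const_mul, integral_zpow (Or.inr ⟨by norm_num, hzero⟩),
          integral_inv hzero, div_one, show (-2 : ℤ) + 1 = -1 by norm_num, one_zpow, zpow_neg_one]
        push_cast
        ring

lemma monotoneOn_integral_exp_div_sq (hf : ContinuousOn f (Ici 1))
    (hf_nonneg : ∀ s, 1 ≤ s → 0 ≤ f s) :
    MonotoneOn (fun x ↦ ∫ s in (1 : ℝ)..Real.exp x, f s / s ^ 2) (Ici 0) := by
  intro a ha b hb hab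
  refine intervalIntegral.integral_mono_interval le_rfl (Real.one_le_exp ha)
    (Real.exp_le_exp.2 hab) ?_ (intervalIntegrable_of_continuousOn_Ici (continuousOn_div_sq hf)
      le_rfl (Real.one_le_exp hb))
  filter_upwards [ae_restrict_mem measurableSet_Ioc] with s hs
  exact div_nonneg (hf_nonneg s hs.1.le) (sq_nonneg s)

lemma tendsto_integral_div_sq_div_log_of_tendsto_exp_sq (hf : ContinuousOn f (Ici 1))
    (hf_nonneg : ∀ s, 1 ≤ s → 0 ≤ f s)
    (h : Tendsto (fun n : ℕ ↦
      (∫ s in (1 : ℝ)..Real.exp ((n : ℝ) ^ 2), (f s - y - δ * s) / s ^ 2) / (n : ℝ) ^ 2)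
      atTop (𝓝 0)) :
    Tendsto (fun t ↦ (∫ s in (1 : ℝ)..t, f s / s ^ 2) / Real.log t) atTop (𝓝 δ) := by
  have hsq : Tendsto (fun n : ℕ ↦ (n : ℝ) ^ 2) atTop atTop :=
    (tendsto_pow_atTop two_ne_zero).comp tendsto_natCast_atTop_atTop
  have hstart : Tendsto (fun n : ℕ ↦ y * (1 - (Real.exp ((n : ℝ) ^ 2))⁻¹) / (n : ℝ) ^ 2)
      atTop (𝓝 0) :=
    ((tendsto_const_nhds.sub
      (tendsto_inv_atTop_zero.comp (Real.tendsto_exp_atTop.comp hsq))).const_mul y).div_atTop hsq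
  have hgrid : Tendsto (fun n : ℕ ↦
      (∫ s in (1 : ℝ)..Real.exp ((n : ℝ) ^ 2), f s / s ^ 2) / (n : ℝ) ^ 2) atTop (𝓝 δ) := by
    have hsum := (h.add hstart).add_const δ
    rw [add_zero, zero_add] at hsum
    refine hsum.congr' ?_
    filter_upwards [eventually_ne_atTop 0] with n hn
    have hn' : (n : ℝ) ≠ 0 := Nat.cast_ne_zero.2 hn
    rw [integral_div_sq_eq (y := y) (δ := δ) hf (Real.one_le_exp (sq_nonneg _)), Real.log_exp]
    field_simp
  refine ((tendsto_div_atTop_of_tendsto_sq (monotoneOn_integral_exp_div_sq hf hf_nonneg)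
    hgrid).comp Real.tendsto_log_atTop).congr' ?_
  filter_upwards [eventually_gt_atTop 0] with t ht
  simp only [Function.comp_apply, Real.exp_log ht]

variable {Ω : Type*} {m : MeasurableSpace Ω} {μ : Measure Ω} [SFinite μ] {g : ℝ → Ω → ℝ} {C : ℝ}

lemma ae_tendsto_intervalIntegral_exp_sq_div_sq (hg : StronglyMeasurable (Function.uncurry g))
    (hL2 : ∀ s, MemLp (g s) 2 μ)
    (hcov : ∀ s u, 1 ≤ s → s ≤ u → ∫ ω, g s ω * g u ω ∂μ ≤ C / u ^ 2) :
    ∀ᵐ ω ∂μ, Tendsto (fun n : ℕ ↦ (∫ s in (1 : ℝ)..Real.exp ((n : ℝ) ^ 2), g s ω) / (n : ℝ) ^ 2)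
      atTop (𝓝 0) := by
  have hT (n : ℕ) : 1 ≤ Real.exp ((n : ℝ) ^ 2) := Real.one_le_exp (sq_nonneg _)
  have hsum : Summable fun n : ℕ ↦
      ∫ ω, ((∫ s in (1 : ℝ)..Real.exp ((n : ℝ) ^ 2), g s ω) / (n : ℝ) ^ 2) ^ 2 ∂μ := by
    refine .of_nonneg_of_le (fun n ↦ integral_nonneg fun ω ↦ sq_nonneg _) (fun n ↦ ?_)
      ((Real.summable_one_div_nat_pow.2 one_lt_two).mul_left (2 * C))
    have hbound := integral_sq_intervalIntegral_le_of_integral_mul_le_div_sq hg hL2 (hT n) hcov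
    rw [Real.log_exp] at hbound
    simp only [div_pow, integral_div]
    rcases eq_or_ne n 0 with rfl | hn
    · simp
    · have hn' : (n : ℝ) ≠ 0 := Nat.cast_ne_zero.2 hn
      rw [div_le_iff₀ (by positivity)]
      refine hbound.trans_eq ?_
      field_simp
  filter_upwards [ae_tendsto_zero_of_summable_integral (fun n ↦ by
    simpa only [div_pow] using
      (integrable_sq_intervalIntegral_of_integral_mul_le_div_sq hg hL2 (hT n) hcov).div_const _)
    (fun n ω ↦ sq_nonneg _) hsum] with ω hω
  have hsqrt := hω.sqrt
  simp only [Real.sqrt_sq_eq_abs, Real.sqrt_zero] at hsqrt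
  exact (tendsto_zero_iff_abs_tendsto_zero _).2 hsqrt

end ExponentialGrid

namespace IsBESQ

variable {Ω : Type*} {m : MeasurableSpace Ω} {μ : Measure Ω} {ℱ : Filtration ℝ m} {δ y : ℝ}
  {Y : ℝ → Ω → ℝ}

/-- The compensated process `Y_t - y - δ t`, the martingale of the definition of `IsBESQ`. -/
def compensated (δ y : ℝ) (Y : ℝ → Ω → ℝ) (t : ℝ) (ω : Ω) : ℝ :=
  Y t ω - y - δ * t

lemma stronglyMeasurable (hY : IsBESQ μ ℱ δ y Y) (t : ℝ) : StronglyMeasurable (Y t) :=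
  (hY.adapted t).stronglyMeasurable.mono (ℱ.le t)

lemma stronglyMeasurable_uncurry (hY : IsBESQ μ ℱ δ y Y) :
    StronglyMeasurable (Function.uncurry Y) :=
  (measurable_uncurry_of_continuous_of_measurable hY.cont
    fun t ↦ (hY.stronglyMeasurable t).measurable).stronglyMeasurable

lemma memLp_two (hY : IsBESQ μ ℱ δ y Y) (t : ℝ) : MemLp (Y t) 2 μ :=
  (memLp_two_iff_integrable_sq (hY.stronglyMeasurable t).aestronglyMeasurable).2
    (hY.integrable_sq t)

lemma memLp_two_compensated [IsFiniteMeasure μ] (hY : IsBESQ μ ℱ δ y Y) (t : ℝ) :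
    MemLp (compensated δ y Y t) 2 μ :=
  ((hY.memLp_two t).sub (memLp_const y)).sub (memLp_const (δ * t))

lemma integrable [IsFiniteMeasure μ] (hY : IsBESQ μ ℱ δ y Y) (t : ℝ) : Integrable (Y t) μ :=
  (hY.memLp_two t).integrable one_le_two

lemma compensated_zero (hY : IsBESQ μ ℱ δ y Y) (ω : Ω) : compensated δ y Y 0 ω = 0 := by
  simp [compensated, hY.init]

lemma martingale_compensated (hY : IsBESQ μ ℱ δ y Y) :
    Martingale (fun t : ℝ≥0 ↦ compensated δ y Y t) (timeChange ℱ NNReal.coe_mono) μ :=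
  ⟨fun t ↦ (((hY.adapted t).sub_const y).sub_const (δ * t)).stronglyMeasurable,
    fun s t hst ↦ hY.mart s t s.coe_nonneg hst⟩

variable [IsProbabilityMeasure μ]

lemma integral_eq (hY : IsBESQ μ ℱ δ y Y) {t : ℝ} (ht : 0 ≤ t) :
    ∫ ω, Y t ω ∂μ = y + δ * t := by
  lift t to ℝ≥0 using ht
  have hmean := hY.martingale_compensated.setIntegral_eq (zero_le : 0 ≤ t) MeasurableSet.univ
  simp only [setIntegral_univ, NNReal.coe_zero, hY.compensated_zero, integral_zero] at hmean
  simp only [compensated, sub_sub] at hmean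
  rw [integral_sub (hY.integrable t) (integrable_const _), integral_const, probReal_univ,
    one_smul] at hmean
  linarith

lemma mean_nonneg (hY : IsBESQ μ ℱ δ y Y) {t : ℝ} (ht : 0 ≤ t) : 0 ≤ y + δ * t :=
  hY.integral_eq ht ▸ integral_nonneg (hY.nonneg t)

lemma start_nonneg (hY : IsBESQ μ ℱ δ y Y) : 0 ≤ y := by
  simpa using hY.mean_nonneg le_rfl

lemma dimension_nonneg (hY : IsBESQ μ ℱ δ y Y) : 0 ≤ δ := by
  have hy := hY.start_nonneg
  by_contra! hδ
  have hmean := hY.mean_nonneg (t := -(y + 1) / δ) (div_nonneg_of_nonpos (by linarith) hδ.le)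
  rw [mul_div_cancel₀ _ hδ.ne] at hmean
  linarith

lemma integrable_prod (hY : IsBESQ μ ℱ δ y Y) (t : ℝ) :
    Integrable (fun z : Ω × ℝ ↦ Y z.2 z.1) (μ.prod (volume.restrict (Ioc 0 t))) := by
  refine integrable_prod_of_ae_integral_norm_le (C := y + δ * t)
    (hY.stronglyMeasurable_uncurry.comp_measurable measurable_swap).aestronglyMeasurable
    (ae_of_all _ hY.integrable) ?_
  filter_upwards [ae_restrict_mem measurableSet_Ioc] with s hs
  simp only [Real.norm_of_nonneg (hY.nonneg s _), hY.integral_eq hs.1.le]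
  have := hY.dimension_nonneg
  gcongr
  exact hs.2

lemma integrable_intervalIntegral (hY : IsBESQ μ ℱ δ y Y) {t : ℝ} (ht : 0 ≤ t) :
    Integrable (fun ω ↦ ∫ s in (0 : ℝ)..t, Y s ω) μ := by
  simp only [intervalIntegral.integral_of_le ht]
  exact (hY.integrable_prod t).integral_prod_left

lemma integral_intervalIntegral (hY : IsBESQ μ ℱ δ y Y) {t : ℝ} (ht : 0 ≤ t) :
    ∫ ω, (∫ s in (0 : ℝ)..t, Y s ω) ∂μ = y * t + δ * t ^ 2 / 2 := by
  calc ∫ ω, (∫ s in (0 : ℝ)..t, Y s ω) ∂μ = ∫ s in (0 : ℝ)..t, (∫ ω, Y s ω ∂μ) := by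
        simp only [intervalIntegral.integral_of_le ht]
        exact integral_integral_swap (hY.integrable_prod t)
    _ = ∫ s in (0 : ℝ)..t, (y + δ * s) := by
        refine intervalIntegral.integral_congr fun s hs ↦ hY.integral_eq ?_
        rw [uIcc_of_le ht] at hs
        exact hs.1
    _ = y * t + δ * t ^ 2 / 2 := by
        rw [intervalIntegral.integral_add intervalIntegrable_const
          (intervalIntegral.intervalIntegrable_id.const_mul δ), intervalIntegral.integral_const,
          intervalIntegral.integral_const_mul, integral_id, smul_eq_mul]
        ring

lemma integral_compensated_sq (hY : IsBESQ μ ℱ δ y Y) {t : ℝ} (ht : 0 ≤ t) :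
    ∫ ω, compensated δ y Y t ω ^ 2 ∂μ = 4 * y * t + 2 * δ * t ^ 2 := by
  have hzero : ∫ ω, (compensated δ y Y t ω ^ 2 - 4 * ∫ s in (0 : ℝ)..t, Y s ω) ∂μ = 0 := by
    rw [← integral_condExp (ℱ.le 0)]
    refine integral_eq_zero_of_ae ((hY.qv 0 t le_rfl ht).trans (ae_of_all _ fun ω ↦ ?_))
    simp [hY.init]
  rw [integral_sub (hY.memLp_two_compensated t).integrable_sq
    ((hY.integrable_intervalIntegral ht).const_mul 4), integral_const_mul,
    hY.integral_intervalIntegral ht] at hzero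
  linarith

lemma integral_compensated_mul (hY : IsBESQ μ ℱ δ y Y) {s t : ℝ} (hs : 0 ≤ s) (hst : s ≤ t) :
    ∫ ω, compensated δ y Y s ω * compensated δ y Y t ω ∂μ = 4 * y * s + 2 * δ * s ^ 2 := by
  rw [← hY.integral_compensated_sq hs]
  lift t to ℝ≥0 using hs.trans hst
  lift s to ℝ≥0 using hs
  exact martingale_integral_mul_eq_integral_sq hY.martingale_compensated
    (fun r ↦ hY.memLp_two_compensated r) hst

lemma integral_compensated_div_sq_mul_le (hY : IsBESQ μ ℱ δ y Y) {s t : ℝ} (hs : 1 ≤ s)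
    (hst : s ≤ t) :
    ∫ ω, compensated δ y Y s ω / s ^ 2 * (compensated δ y Y t ω / t ^ 2) ∂μ ≤
      4 * (y + δ) / t ^ 2 := by
  have hs0 : 0 < s := by linarith
  have ht0 : 0 < t := by linarith
  have hvar : 4 * y * s + 2 * δ * s ^ 2 ≤ 4 * (y + δ) * s ^ 2 := by
    nlinarith [mul_nonneg hY.start_nonneg hs0.le, mul_nonneg hY.dimension_nonneg (sq_nonneg s)]
  simp only [div_mul_div_comm, integral_div, hY.integral_compensated_mul hs0.le hst]
  rw [div_le_div_iff₀ (by positivity) (by positivity)]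
  calc (4 * y * s + 2 * δ * s ^ 2) * t ^ 2 ≤ 4 * (y + δ) * s ^ 2 * t ^ 2 := by gcongr
    _ = 4 * (y + δ) * (s ^ 2 * t ^ 2) := by ring

lemma ae_tendsto_integral_div_sq_div_log (hY : IsBESQ μ ℱ δ y Y) :
    ∀ᵐ ω ∂μ, Tendsto (fun t ↦ (∫ s in (1 : ℝ)..t, Y s ω / s ^ 2) / Real.log t) atTop (𝓝 δ) := by
  have hmeas : StronglyMeasurable
      (Function.uncurry fun (s : ℝ) (ω : Ω) ↦ compensated δ y Y s ω / s ^ 2) :=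
    ((((hY.stronglyMeasurable_uncurry.measurable.sub_const y).sub
      (measurable_fst.const_mul δ)).div (measurable_fst.pow_const 2))).stronglyMeasurable
  have hL2 (s : ℝ) : MemLp (fun ω ↦ compensated δ y Y s ω / s ^ 2) 2 μ := by
    simpa only [div_eq_mul_inv] using (hY.memLp_two_compensated s).mul_const (s ^ 2)⁻¹
  filter_upwards [ae_tendsto_intervalIntegral_exp_sq_div_sq hmeas hL2
    fun s t hs hst ↦ hY.integral_compensated_div_sq_mul_le hs hst] with ω hω
  exact tendsto_integral_div_sq_div_log_of_tendsto_exp_sq (hY.cont ω).continuousOn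
    (fun s _ ↦ hY.nonneg s ω) hω

lemma submartingale (hY : IsBESQ μ ℱ δ y Y) :
    Submartingale (fun t : ℝ≥0 ↦ Y t) (timeChange ℱ NNReal.coe_mono) μ := by
  refine ⟨fun t ↦ (hY.adapted t).stronglyMeasurable, fun s t hst ↦ ?_, fun t ↦ hY.integrable t⟩
  have hdecomp : Y t = compensated δ y Y t + fun _ ↦ y + δ * t := by
    funext ω
    simp [compensated]
  have hadd := condExp_add (m := ℱ s) ((hY.memLp_two_compensated t).integrable one_le_two)
    (integrable_const (μ := μ) (y + δ * t))
  rw [← hdecomp, condExp_const (ℱ.le s)] at hadd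
  filter_upwards [hadd, hY.martingale_compensated.condExp_ae_eq hst] with ω hadd_ω hcomp_ω
  have hdrift : δ * s ≤ δ * t := mul_le_mul_of_nonneg_left hst hY.dimension_nonneg
  change Y s ω ≤ (μ[Y t | ℱ s]) ω
  change (μ[compensated δ y Y t | ℱ s]) ω = compensated δ y Y s ω at hcomp_ω
  rw [hadd_ω, Pi.add_apply, hcomp_ω, compensated]
  linarith

lemma measure_exists_lt_le (hY : IsBESQ μ ℱ δ y Y) {T c : ℝ} (hT : 0 ≤ T) (hc : 0 < c) :
    μ {ω | ∃ s ∈ Icc 0 T, c < Y s ω} ≤ ENNReal.ofReal ((y + δ * T) / c) := by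
  rw [← hY.integral_eq hT]
  lift T to ℝ≥0 using hT
  refine (measure_mono ?_).trans (submartingale_measure_exists_lt_le hY.submartingale
    (fun t ↦ hY.nonneg t) (fun ω ↦ (hY.cont ω).comp NNReal.continuous_coe) hc T)
  rintro ω ⟨s, ⟨hs, hsT⟩, hlt⟩
  exact ⟨⟨s, hs⟩, hsT, hlt⟩

lemma measure_exists_exp_rpow_lt_le (hY : IsBESQ μ ℱ δ y Y) (ε : ℝ) (n : ℕ) :
    μ {ω | ∃ s ∈ Icc 0 (Real.exp n), Real.exp n ^ (1 + ε) < Y s ω} ≤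
      ENNReal.ofReal ((y + δ) * Real.exp (-ε) ^ n) := by
  refine (hY.measure_exists_lt_le (Real.exp_pos _).le (by positivity)).trans
    (ENNReal.ofReal_le_ofReal ?_)
  have hexp : Real.exp (-ε) ^ n * Real.exp n ^ (1 + ε) = Real.exp n := by
    rw [← Real.exp_nat_mul, ← Real.exp_mul, ← Real.exp_add]
    ring_nf
  rw [div_le_iff₀ (by positivity), mul_assoc, hexp, add_mul]
  gcongr
  exact le_mul_of_one_le_right hY.start_nonneg (Real.one_le_exp n.cast_nonneg)

lemma ae_exists_le_mul_rpow_of_pos (hY : IsBESQ μ ℱ δ y Y) {ε : ℝ} (hε : 0 < ε) :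
    ∀ᵐ ω ∂μ, ∃ K, ∀ s, 1 ≤ s → Y s ω ≤ K * s ^ (1 + ε) := by
  have hgeom : Summable fun n : ℕ ↦ (y + δ) * Real.exp (-ε) ^ n :=
    (summable_geometric_of_lt_one (Real.exp_pos _).le (by simpa using hε)).mul_left _
  filter_upwards [ae_eventually_notMem (ne_top_of_le_ne_top hgeom.tsum_ofReal_ne_top
    (ENNReal.tsum_le_tsum (hY.measure_exists_exp_rpow_lt_le ε)))] with ω hω
  refine exists_le_mul_rpow_of_eventually_le_exp_rpow (by linarith) (hω.mono fun n hn s hs ↦ ?_)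
  exact le_of_not_gt fun hlt ↦ hn ⟨s, hs, hlt⟩

lemma ae_exists_le_mul_rpow (hY : IsBESQ μ ℱ δ y Y) :
    ∀ᵐ ω ∂μ, ∀ ε : ℝ, 0 < ε → ∃ K, ∀ s, 1 ≤ s → Y s ω ≤ K * s ^ (1 + ε) := by
  filter_upwards [ae_all_iff.2 fun n : ℕ ↦
    hY.ae_exists_le_mul_rpow_of_pos (Nat.one_div_pos_of_nat (α := ℝ) (n := n))] with ω hω ε hε
  obtain ⟨n, hn⟩ := exists_nat_one_div_lt hε
  obtain ⟨K, hK⟩ := hω n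
  have hK0 : 0 ≤ K := by simpa using (hY.nonneg 1 ω).trans (hK 1 le_rfl)
  refine ⟨K, fun s hs ↦ (hK s hs).trans ?_⟩
  gcongr

end IsBESQ

theorem stmt_13_general {Ω : Type*} {m : MeasurableSpace Ω} (μ : Measure Ω) [IsProbabilityMeasure μ]
    (ℱ : Filtration ℝ m) (δ y : ℝ) (hδ : 0 < δ) (Y : ℝ → Ω → ℝ) (hY : IsBESQ μ ℱ δ y Y)
    (α γ : ℝ) (hα : 0 ≤ α) (hγ : -1 ≤ γ + α) :
    ∀ᵐ ω ∂μ,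
      Tendsto (fun t : ℝ ↦ Real.log (∫ s in (1 : ℝ)..t, s ^ γ * Y s ω ^ α) / Real.log t)
        atTop (𝓝 (1 + γ + α)) := by
  filter_upwards [hY.ae_exists_le_mul_rpow, hY.ae_tendsto_integral_div_sq_div_log]
    with ω hgrowth haverage
  exact tendsto_log_integral_rpow_mul_rpow_div_log (hY.cont ω).continuousOn
    (fun s _ ↦ hY.nonneg s ω) hα hγ hgrowth hδ haverage

theorem stmt_13 {Ω : Type*} {m : MeasurableSpace Ω} (μ : Measure Ω) [IsProbabilityMeasure μ]
    (ℱ : Filtration ℝ m) (δ y : ℝ) (hδ : 0 < δ) (hy : 0 ≤ y)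
    (Y : ℝ → Ω → ℝ) (hY : IsBESQ μ ℱ δ y Y)
    (α γ : ℝ) (hα : 0 ≤ α) (hγ : -α < γ) :
    ∀ᵐ ω ∂μ,
      Tendsto (fun t : ℝ => Real.log (∫ s in (1:ℝ)..t, s ^ γ * (Y s ω) ^ α) / Real.log t)
        atTop (nhds (1 + γ + α)) :=
  stmt_13_general μ ℱ δ y hδ Y hY α γ hα (by linarith)
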